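/- Let G be a connected bridgeless cubic graph in which every 2-factor consists only of 5-cycles. Then every path of length three in G is contained in a cycle of length five. -/

import Mathlib

/-! Multigraphs: vertex type `V`, edge type `E`, incidence map `ends : E → Sym2 V`. -/

namespace Mg

variable {V E : Type}

/-- No loops: no edge has equal endpoints. -/
def NoLoops (ends : E → Sym2 V) : Prop := ∀ e, ¬ (ends e).IsDiag

/-- Cubic: every vertex is incident with exactly three edges. -/
def IsCubic (ends : E → Sym2 V) : Prop := ∀ v, {e | v ∈ ends e}.ncard = 3

/-- Reachability using only edges in `F`. -/
def Reach (ends : E → Sym2 V) (F : Set E) : V → V → Prop :=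
  Relation.ReflTransGen (fun a b => ∃ e ∈ F, ends e = s(a, b))

/-- Connected. -/
def Connected (ends : E → Sym2 V) : Prop := ∀ v w, Reach ends Set.univ v w

/-- Bridgeless: the endpoints of each edge remain joined after its removal. -/
def Bridgeless (ends : E → Sym2 V) : Prop :=
  ∀ e v w, ends e = s(v, w) → Reach ends {f | f ≠ e} v w

/-- A 2-factor: every vertex is incident with exactly two edges of `F`. -/
def IsTwoFactor (ends : E → Sym2 V) (F : Set E) : Prop :=
  ∀ v, {e | e ∈ F ∧ v ∈ ends e}.ncard = 2

/-- The component of `v` in the spanning subgraph with edge set `F`. -/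
def component (ends : E → Sym2 V) (F : Set E) (v : V) : Set V := {w | Reach ends F v w}

/-- Every 2-factor consists only of 5-cycles: each component of any 2-factor
has exactly five vertices. -/
def TwoFactorsAllC5 (ends : E → Sym2 V) : Prop :=
  ∀ F : Set E, IsTwoFactor ends F → ∀ v, (component ends F v).ncard = 5

/-- A perfect matching: every vertex is incident with exactly one edge of `M`. -/
def IsPerfectMatching (ends : E → Sym2 V) (M : Set E) : Prop :=
  ∀ v, ∃! e, e ∈ M ∧ v ∈ ends e

/-- A cycle of length `n`: `n` distinct vertices and `n` distinct edges, cyclically. -/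
def HasCycle (ends : E → Sym2 V) (n : ℕ) : Prop :=
  ∃ (c : ZMod n → V) (f : ZMod n → E), Function.Injective c ∧ Function.Injective f ∧
    ∀ i, ends (f i) = s(c i, c (i + 1))

end Mg

/-!
A perfect matching avoiding the three edges of a path `u v w x` yields a 2-factor through the path,
and the 5-cycle of this 2-factor containing the path is the one sought. To avoid the path, the
matching only has to contain the third edge at `v` and the third edge at `w`; typically these are
the end edges of another path of length three.

Suppose that no perfect matching contains both end edges of a path on the vertex set `R`. By
Tutte's theorem there is a set `A ⊇ R` whose removal leaves at least `|A| - 2` odd components. Each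
of them sends at least three edges to `A`, since the graph is cubic and bridgeless, while the three
path edges leave only `3 |A| - 6` edges to send. So there is equality everywhere: the path edges
are the only edges inside `A`, and all odd components have edge cuts of size three.

Such a cut is trivial. Any two of its edges lie in a 2-factor missing the third, of which exactly
one 5-cycle crosses the cut, so the size of a side `X` modulo 5 is the number of vertices of that
cycle in `X`. Residue 1 makes all three cut edges meet in one vertex and residue 2 makes their ends
in `X` a triangle, which is absurd; as 5 divides the number of vertices, one side is a single
vertex.

Hence the complement of `A` is independent and has `|A| - 2` vertices. A 2-factor missing the first
path edge therefore uses both other edges inside `A`; its cycle through them has exactly two more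
vertices in `A` than outside, an even number in total, contradicting that it is a 5-cycle.
-/

namespace Mg

variable {V E : Type} {ends : E → Sym2 V} {F M N : Set E} {X Y K : Set V} {e : E} {a b v : V}

/-- The edge cut `∂X`: the edges of the multigraph with one end in `X` and the other outside. -/
def boundary (ends : E → Sym2 V) (X : Set V) : Set E :=
  {e | ∃ a b, ends e = s(a, b) ∧ a ∈ X ∧ b ∉ X}

/-- The edges of the subgraph induced on `X`, i.e. those with all their ends in `X`. -/
def inside (ends : E → Sym2 V) (X : Set V) : Set E :=
  {e | ∀ v ∈ ends e, v ∈ X}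

/-- The spanning subgraph with edge set `F` is `k`-regular. `IsTwoFactor` is the case `k = 2`;
as in `IsCubic`, a loop would count once. -/
def IsRegular (ends : E → Sym2 V) (F : Set E) (k : ℕ) : Prop :=
  ∀ v, {e | e ∈ F ∧ v ∈ ends e}.ncard = k

lemma NoLoops.ne (hl : NoLoops ends) (he : ends e = s(a, b)) : a ≠ b := by
  simpa [he] using hl e

lemma exists_ends_eq (ends : E → Sym2 V) (e : E) : ∃ a b, ends e = s(a, b) :=
  let ⟨⟨a, b⟩, h⟩ := Quot.exists_rep (ends e)
  ⟨a, b, h.symm⟩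

lemma mem_boundary_iff (he : ends e = s(a, b)) :
    e ∈ boundary ends X ↔ (a ∈ X ∧ b ∉ X) ∨ (b ∈ X ∧ a ∉ X) := by
  simp only [boundary, Set.mem_ofPred_eq, he, Sym2.eq_iff]
  grind

lemma mem_inside_iff (he : ends e = s(a, b)) : e ∈ inside ends X ↔ a ∈ X ∧ b ∈ X := by
  simp [inside, he]

lemma inside_mono (h : X ⊆ Y) : inside ends X ⊆ inside ends Y :=
  fun _ he v hv => h (he v hv)

lemma boundary_compl (ends : E → Sym2 V) (X : Set V) : boundary ends Xᶜ = boundary ends X := by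
  ext e
  obtain ⟨a, b, he⟩ := exists_ends_eq ends e
  simp only [mem_boundary_iff he, Set.mem_compl_iff]
  tauto

lemma boundary_univ (ends : E → Sym2 V) : boundary ends Set.univ = ∅ := by
  simp [boundary]

lemma disjoint_inside_boundary (ends : E → Sym2 V) (X : Set V) :
    Disjoint (inside ends X) (boundary ends X) := by
  rw [Set.disjoint_left]
  rintro e hin ⟨a, b, he, -, hb⟩
  exact hb (hin b (by simp [he]))

lemma disjoint_boundary_iff :
    Disjoint F (boundary ends X) ↔ ∀ e ∈ F, ∀ a b, ends e = s(a, b) → a ∈ X → b ∈ X := by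
  simp only [Set.disjoint_left, boundary, Set.mem_ofPred_eq, not_exists, not_and, not_not]

lemma disjoint_boundary_sdiff (hX : Disjoint F (boundary ends X))
    (hY : Disjoint F (boundary ends Y)) : Disjoint F (boundary ends (X \ Y)) := by
  rw [disjoint_boundary_iff] at *
  exact fun e he a b hab ha => ⟨hX e he a b hab ha.1,
    fun hb => ha.2 (hY e he b a (hab.trans Sym2.eq_swap) hb)⟩

lemma inter_boundary_inter_subset (hK : Disjoint F (boundary ends K)) :
    F ∩ boundary ends (K ∩ X) ⊆ F ∩ boundary ends X := by
  rintro e ⟨heF, a, b, he, ha, hb⟩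
  exact ⟨heF, a, b, he, ha.2, fun hbX =>
    hb ⟨disjoint_boundary_iff.1 hK e heF a b he ha.1, hbX⟩⟩

lemma mem_of_reach (hX : Disjoint F (boundary ends X)) (h : Reach ends F a b) (ha : a ∈ X) :
    b ∈ X := by
  induction h with
  | refl => exact ha
  | tail _ hstep ih =>
    obtain ⟨e, heF, he⟩ := hstep
    exact disjoint_boundary_iff.1 hX e heF _ _ he ih

lemma mem_component_self (ends : E → Sym2 V) (F : Set E) (v : V) : v ∈ component ends F v :=
  Relation.ReflTransGen.refl

lemma disjoint_boundary_component (ends : E → Sym2 V) (F : Set E) (v : V) :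
    Disjoint F (boundary ends (component ends F v)) :=
  disjoint_boundary_iff.2 fun e he _ _ hab ha => Relation.ReflTransGen.tail ha ⟨e, he, hab⟩

lemma component_subset (hX : Disjoint F (boundary ends X)) (hv : v ∈ X) :
    component ends F v ⊆ X :=
  fun _ hw => mem_of_reach hX hw hv

lemma mem_component_of_ends (heF : e ∈ F) (he : ends e = s(a, b))
    (ha : a ∈ component ends F v) : b ∈ component ends F v :=
  disjoint_boundary_iff.1 (disjoint_boundary_component ends F v) e heF a b he ha

lemma Connected.eq_univ (hconn : Connected ends) (hX : boundary ends X = ∅) (hne : X.Nonempty) :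
    X = Set.univ := by
  obtain ⟨a, ha⟩ := hne
  exact Set.eq_univ_of_forall fun b => mem_of_reach (by simp [hX]) (hconn a b) ha

lemma dvd_ncard_of_forall_ncard_component [Finite V] {n : ℕ}
    (hn : ∀ v, (component ends F v).ncard = n) (hX : Disjoint F (boundary ends X)) :
    n ∣ X.ncard := by
  induction hm : X.ncard using Nat.strong_induction_on generalizing X with
  | _ m ih =>
    subst hm
    obtain rfl | ⟨v, hv⟩ := X.eq_empty_or_nonempty
    · simp
    have hsplit := Set.ncard_sdiff_add_ncard_of_subset (component_subset hX hv)
    have hpos : 0 < (component ends F v).ncard :=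
      (Set.ncard_pos).2 ⟨v, mem_component_self ends F v⟩
    have hdvd := ih _ (by omega)
      (disjoint_boundary_sdiff hX (disjoint_boundary_component ends F v)) rfl
    rw [← hsplit, hn v]
    exact hdvd.add dvd_rfl

lemma IsCubic.isRegular (hc : IsCubic ends) : IsRegular ends Set.univ 3 := by
  simpa [IsRegular, IsCubic] using hc

lemma IsTwoFactor.isRegular (hF : IsTwoFactor ends F) : IsRegular ends F 2 := hF

open Classical in
lemma ncard_setOf_mem_ends (hl : NoLoops ends) (X : Set V) (e : E) :
    {v | v ∈ X ∧ v ∈ ends e}.ncard =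
      (if e ∈ boundary ends X then 1 else 0) + 2 * (if e ∈ inside ends X then 1 else 0) := by
  obtain ⟨a, b, he⟩ := exists_ends_eq ends e
  have hab : {v | v ∈ X ∧ v ∈ ends e} = X ∩ {a, b} := by
    ext; simp only [he, Sym2.mem_iff]; rfl
  simp only [hab, mem_boundary_iff he, mem_inside_iff he]
  by_cases ha : a ∈ X <;> by_cases hb : b ∈ X <;>
    simp [ha, hb, Set.inter_insert_of_mem, Set.inter_insert_of_notMem, Set.ncard_pair (hl.ne he)]

lemma IsRegular.mul_ncard_eq [Finite V] [Finite E] {k : ℕ} (hF : IsRegular ends F k)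
    (hl : NoLoops ends) (X : Set V) :
    k * X.ncard = (F ∩ boundary ends X).ncard + 2 * (F ∩ inside ends X).ncard := by
  classical
  have := Fintype.ofFinite V
  have := Fintype.ofFinite E
  have hcount := Finset.sum_card_bipartiteAbove_eq_sum_card_bipartiteBelow
    (s := F.toFinset) (t := X.toFinset) fun e v => v ∈ ends e
  have hdeg : ∀ v ∈ X.toFinset, (Finset.bipartiteBelow (fun e v => v ∈ ends e) F.toFinset v).card
      = k := fun v _ => by
    rw [← hF v, ← Set.ncard_coe_finset]
    simp [Finset.bipartiteBelow]
  have hends : ∀ e ∈ F.toFinset, (Finset.bipartiteAbove (fun e v => v ∈ ends e) X.toFinset e).card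
      = (if e ∈ boundary ends X then 1 else 0) + 2 * (if e ∈ inside ends X then 1 else 0) :=
    fun e _ => by
    rw [← ncard_setOf_mem_ends hl, ← Set.ncard_coe_finset]
    simp [Finset.bipartiteAbove]
  rw [Finset.sum_congr rfl hends, Finset.sum_congr rfl hdeg, Finset.sum_add_distrib,
    ← Finset.mul_sum, ← Finset.card_filter, ← Finset.card_filter, Finset.sum_const, smul_eq_mul,
    ← Set.ncard_coe_finset, ← Set.ncard_coe_finset, ← Set.ncard_coe_finset] at hcount
  simp only [Finset.coe_filter, Set.mem_toFinset, Set.coe_toFinset] at hcount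
  rw [mul_comm, ← hcount]
  rfl

lemma odd_ncard_boundary_iff [Finite V] [Finite E] (hl : NoLoops ends) (hc : IsCubic ends)
    (X : Set V) : Odd (boundary ends X).ncard ↔ Odd X.ncard := by
  have h := hc.isRegular.mul_ncard_eq hl X
  simp only [Set.univ_inter] at h
  grind

lemma even_card [Finite V] [Finite E] (hl : NoLoops ends) (hc : IsCubic ends) :
    Even (Nat.card V) := by
  rw [← Nat.not_odd_iff_even, ← Set.ncard_univ, ← odd_ncard_boundary_iff hl hc, boundary_univ]
  simp

lemma Bridgeless.ncard_boundary_ne_one (hb : Bridgeless ends) (X : Set V) :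
    (boundary ends X).ncard ≠ 1 := by
  intro h
  obtain ⟨e, he⟩ := Set.ncard_eq_one.1 h
  obtain ⟨a, b, hab, ha, hbX⟩ := he ▸ Set.mem_singleton e
  refine hbX (mem_of_reach ?_ (hb e a b hab) ha)
  simp [he]

lemma three_le_ncard_boundary [Finite V] [Finite E] (hl : NoLoops ends) (hc : IsCubic ends)
    (hb : Bridgeless ends) (hX : Odd X.ncard) : 3 ≤ (boundary ends X).ncard := by
  have hodd := (odd_ncard_boundary_iff hl hc X).2 hX
  have hne := hb.ncard_boundary_ne_one X
  grind

/-! ### Matchings and Tutte barriers -/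

/-- `M` is a perfect matching of the subgraph induced on `X`. -/
def IsMatchingOn (ends : E → Sym2 V) (X : Set V) (M : Set E) : Prop :=
  M ⊆ inside ends X ∧ ∀ v ∈ X, ∃! e, e ∈ M ∧ v ∈ ends e

/-- The sets in `P` are odd unions of components of the graph with the vertices `A` deleted, as
produced by Tutte's theorem: they are pairwise disjoint, and every edge leaving one of them ends
in `A`. -/
structure IsOddBarrier (ends : E → Sym2 V) (A : Set V) (P : Finset (Set V)) : Prop where
  odd : ∀ C ∈ P, Odd C.ncard
  pairwiseDisjoint : (P : Set (Set V)).PairwiseDisjoint id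
  disjoint : ∀ C ∈ P, Disjoint C A
  mem_or_mem : ∀ C ∈ P, ∀ e a b, ends e = s(a, b) → a ∈ C → b ∈ C ∨ b ∈ A

/-- The simple graph underlying a multigraph, to which Mathlib's version of Tutte's theorem
applies. -/
def toSimpleGraph (ends : E → Sym2 V) : SimpleGraph V :=
  SimpleGraph.fromEdgeSet (Set.range ends)

lemma toSimpleGraph_adj : (toSimpleGraph ends).Adj a b ↔ (∃ e, ends e = s(a, b)) ∧ a ≠ b := by
  simp [toSimpleGraph]

lemma exists_isOddBarrier_card_eq {W : Type} [Finite W] (H : SimpleGraph W) {φ : W → V}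
    {A : Set V} (hφ : Function.Injective φ) (hA : ∀ x, φ x ∉ A)
    (hadj : ∀ e x b, ends e = s(φ x, b) → b ∉ A → ∃ y, φ y = b ∧ (x ≠ y → H.Adj x y)) :
    ∃ P, IsOddBarrier ends A P ∧ P.card = H.oddComponents.ncard := by
  classical
  have heq_of_mem : ∀ (c d : H.ConnectedComponent) v, v ∈ φ '' c.supp → v ∈ φ '' d.supp →
      c = d := by
    rintro c d _ ⟨x, hx, rfl⟩ ⟨y, hy, hxy⟩
    exact SimpleGraph.ConnectedComponent.eq_of_common_vertex hx (hφ hxy ▸ hy)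
  have hinj : Function.Injective fun c : H.ConnectedComponent => φ '' c.supp :=
    hφ.image_injective.comp SimpleGraph.ConnectedComponent.supp_injective
  have hfin : H.oddComponents.Finite := Set.toFinite _
  refine ⟨hfin.toFinset.image fun c => φ '' c.supp, ⟨?odd, ?pairwise, ?disjoint, ?adj⟩, ?card⟩
  case card => rw [Finset.card_image_of_injective _ hinj, Set.ncard_eq_toFinset_card _ hfin]
  case pairwise =>
    rw [Finset.coe_image]
    rintro _ ⟨c, -, rfl⟩ _ ⟨d, -, rfl⟩ hne
    exact Set.disjoint_left.2 fun v hvc hvd =>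
      hne (congrArg (φ '' ·.supp) (heq_of_mem c d v hvc hvd))
  all_goals
    simp only [Finset.forall_mem_image, Set.Finite.mem_toFinset]
    intro c hc
  case odd => rwa [Set.ncard_image_of_injective _ hφ]
  case disjoint =>
    rw [Set.disjoint_left]
    rintro _ ⟨x, -, rfl⟩
    exact hA x
  case adj =>
    rintro e _ b he ⟨x, hx, rfl⟩
    refine or_iff_not_imp_right.2 fun hb => ?_
    obtain ⟨y, rfl, hxy⟩ := hadj e x b he hb
    obtain rfl | hne := eq_or_ne x y
    · exact ⟨x, hx, rfl⟩
    · exact ⟨y, c.mem_supp_of_adj_mem_supp hx (hxy hne), rfl⟩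

lemma exists_isOddBarrier_deleteVerts [Finite V] (R : Set V) (u : Set ↥Rᶜ) :
    ∃ P, IsOddBarrier ends (R ∪ Subtype.val '' u) P ∧
      P.card = ((⊤ : ((toSimpleGraph ends).induce Rᶜ).Subgraph).deleteVerts
        u).coe.oddComponents.ncard := by
  refine exists_isOddBarrier_card_eq _ (φ := fun x => x.1.1)
    (Subtype.val_injective.comp Subtype.val_injective) ?_ fun e x b he hb => ?_
  · rintro x (hR | ⟨y, hy, hxy⟩)
    · exact x.1.2 hR
    · exact x.2.2 (Subtype.val_injective hxy ▸ hy)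
  · have hbR : b ∉ R := fun h => hb (.inl h)
    have hbu : ⟨b, hbR⟩ ∉ u := fun h => hb (.inr ⟨_, h, rfl⟩)
    refine ⟨⟨⟨b, hbR⟩, trivial, hbu⟩, rfl, fun hne => ?_⟩
    exact SimpleGraph.Subgraph.deleteVerts_adj.2 ⟨trivial, x.2.2, trivial, hbu,
      toSimpleGraph_adj.2 ⟨⟨e, he⟩, fun h => hne (Subtype.ext (Subtype.ext h))⟩⟩

lemma exists_isMatchingOn_of_isPerfectMatching {M : ((toSimpleGraph ends).induce X).Subgraph}
    (hM : M.IsPerfectMatching) : ∃ N, IsMatchingOn ends X N := by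
  rw [SimpleGraph.Subgraph.isPerfectMatching_iff] at hM
  have hlift : ∀ z : M.edgeSet, ∃ e, ends e = z.1.map Subtype.val := by
    rintro ⟨⟨a, b⟩, hab⟩
    exact (toSimpleGraph_adj.1 (M.adj_sub hab)).1
  choose g hg using hlift
  refine ⟨Set.range g, ?_, fun v hv => ?_⟩
  · rintro _ ⟨z, rfl⟩ v hv
    rw [hg, Sym2.mem_map] at hv
    obtain ⟨x, -, rfl⟩ := hv
    exact x.2
  obtain ⟨w, hvw, hw⟩ := hM ⟨v, hv⟩
  refine ⟨g ⟨s(⟨v, hv⟩, w), hvw⟩, ⟨⟨_, rfl⟩, by simp [hg]⟩, ?_⟩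
  rintro _ ⟨⟨z, rfl⟩, hz⟩
  rw [hg, Sym2.mem_map] at hz
  obtain ⟨x, hx, rfl⟩ := hz
  obtain ⟨y, hy⟩ := Sym2.mem_iff_exists.1 hx
  have hxy : M.Adj x y := by simpa [hy] using z.2
  have hzw : z.1 = s(x, w) := by rw [hy, hw y hxy]
  exact congrArg g (Subtype.ext hzw)

lemma exists_isMatchingOn_or_isOddBarrier [Finite V] (R : Set V) (heven : Even Rᶜ.ncard) :
    (∃ M, IsMatchingOn ends Rᶜ M) ∨ ∃ A P, R ⊆ A ∧ IsOddBarrier ends A P ∧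
      A.ncard + 2 ≤ P.card + R.ncard := by
  by_cases hpm : ∃ M : ((toSimpleGraph ends).induce Rᶜ).Subgraph, M.IsPerfectMatching
  · exact .inl (hpm.elim fun _ => exists_isMatchingOn_of_isPerfectMatching)
  have := Fintype.ofFinite ↥Rᶜ
  rw [SimpleGraph.tutte] at hpm
  push Not at hpm
  obtain ⟨u, hu⟩ := hpm
  obtain ⟨P, hP, hcard⟩ := exists_isOddBarrier_deleteVerts (ends := ends) R u
  refine .inr ⟨_, P, Set.subset_union_left, hP, ?_⟩
  have hparity := SimpleGraph.odd_ncard_oddComponents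
    ((⊤ : ((toSimpleGraph ends).induce Rᶜ).Subgraph).deleteVerts u).coe
  have hverts : Nat.card ((⊤ : ((toSimpleGraph ends).induce Rᶜ).Subgraph).deleteVerts u).verts +
      u.ncard = Rᶜ.ncard := by
    rw [SimpleGraph.Subgraph.deleteVerts_verts, SimpleGraph.Subgraph.verts_top,
      Nat.card_coe_set_eq, Set.ncard_sdiff_add_ncard_of_subset (Set.subset_univ u),
      Set.ncard_univ, Nat.card_coe_set_eq]
  have hA : (R ∪ Subtype.val '' u).ncard ≤ R.ncard + u.ncard := by
    rw [← Set.ncard_image_of_injective u Subtype.val_injective]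
    exact Set.ncard_union_le _ _
  rw [SimpleGraph.IsTutteViolator, ← hcard] at hu
  rw [← hcard] at hparity
  grind

namespace IsOddBarrier

variable {A R : Set V} {P : Finset (Set V)}

lemma boundary_subset (hP : IsOddBarrier ends A P) {C : Set V} (hC : C ∈ P) :
    boundary ends C ⊆ boundary ends A := by
  rintro e ⟨a, b, he, ha, hb⟩
  exact ⟨b, a, he.trans Sym2.eq_swap, (hP.mem_or_mem C hC e a b he ha).resolve_left hb,
    Set.disjoint_left.1 (hP.disjoint C hC) ha⟩

lemma pairwiseDisjoint_boundary (hP : IsOddBarrier ends A P) :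
    (P : Set (Set V)).PairwiseDisjoint (boundary ends) := by
  intro C hC D hD hne
  rw [Function.onFun, Set.disjoint_left]
  rintro e ⟨a, b, he, ha, hb⟩ heD
  obtain ⟨haD, -⟩ | ⟨hbD, -⟩ := (mem_boundary_iff he).1 heD
  · exact Set.disjoint_left.1 (hP.pairwiseDisjoint hC hD hne) ha haD
  · exact Set.disjoint_left.1 (hP.disjoint D hD) hbD
      ((hP.mem_or_mem C hC e a b he ha).resolve_left hb)

lemma sum_ncard_boundary [Finite E] (hP : IsOddBarrier ends A P) :
    ∑ C ∈ P, (boundary ends C).ncard = (⋃ C ∈ P, boundary ends C).ncard := by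
  rw [← finsum_mem_coe_finset]
  exact (P.finite_toSet.ncard_biUnion (fun _ _ => Set.toFinite _) hP.pairwiseDisjoint_boundary).symm

lemma tight [Finite V] [Finite E] (hP : IsOddBarrier ends A P) (hl : NoLoops ends)
    (hc : IsCubic ends) (hb : Bridgeless ends) (hRA : R ⊆ A)
    (hcard : A.ncard + 2 ≤ P.card + R.ncard) (hR : (boundary ends R).ncard ≤ 6) :
    (boundary ends R).ncard = 6 ∧ A.ncard + 2 = P.card + R.ncard ∧
      inside ends A = inside ends R ∧ (∀ C ∈ P, (boundary ends C).ncard = 3) ∧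
      boundary ends A = ⋃ C ∈ P, boundary ends C := by
  have hthree : ∀ C ∈ P, 3 ≤ (boundary ends C).ncard :=
    fun C hC => three_le_ncard_boundary hl hc hb (hP.odd C hC)
  have hsum : ∑ _C ∈ P, 3 ≤ ∑ C ∈ P, (boundary ends C).ncard := Finset.sum_le_sum hthree
  have hconst : ∑ _C ∈ P, 3 = 3 * P.card := by simp [mul_comm]
  have hunion : ⋃ C ∈ P, boundary ends C ⊆ boundary ends A :=
    Set.iUnion₂_subset fun _ => hP.boundary_subset
  have hunion_card := Set.ncard_le_ncard hunion
  have hinside := inside_mono (ends := ends) hRA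
  have hinside_card := Set.ncard_le_ncard hinside
  have hA := hc.isRegular.mul_ncard_eq hl A
  have hR' := hc.isRegular.mul_ncard_eq hl R
  simp only [Set.univ_inter] at hA hR'
  rw [hP.sum_ncard_boundary] at hsum
  refine ⟨by omega, by omega, ?_, ?_, ?_⟩
  · exact (Set.eq_of_subset_of_ncard_le hinside (by omega)).symm
  · have hsum_eq : ∑ _C ∈ P, 3 = ∑ C ∈ P, (boundary ends C).ncard := by
      rw [hP.sum_ncard_boundary]
      omega
    exact fun C hC => ((Finset.sum_eq_sum_iff_of_le hthree).1 hsum_eq C hC).symm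
  · exact (Set.eq_of_subset_of_ncard_le hunion (by omega)).symm

lemma biUnion_eq_compl (hP : IsOddBarrier ends A P) (hconn : Connected ends) (hA : A.Nonempty)
    (hbd : boundary ends A = ⋃ C ∈ P, boundary ends C) : ⋃ C ∈ P, C = Aᶜ := by
  refine (Set.iUnion₂_subset fun C hC => (hP.disjoint C hC).subset_compl_right).antisymm ?_
  by_contra hsub
  have hclosed : boundary ends (Aᶜ \ ⋃ C ∈ P, C) = ∅ := by
    refine Set.eq_empty_of_forall_notMem ?_
    rintro e ⟨a, b, he, ⟨haA, haP⟩, hb⟩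
    simp only [Set.mem_iUnion, not_exists] at haP
    obtain hbA | ⟨C, hC, hbC⟩ : b ∈ A ∨ ∃ C ∈ P, b ∈ C := by
      simpa [or_iff_not_imp_left] using hb
    · have heA : e ∈ boundary ends A := ⟨b, a, he.trans Sym2.eq_swap, hbA, haA⟩
      rw [hbd] at heA
      obtain ⟨C, hC, heC⟩ := Set.mem_iUnion₂.1 heA
      obtain ⟨haC, -⟩ | ⟨hbC, -⟩ := (mem_boundary_iff he).1 heC
      · exact haP C hC haC
      · exact Set.disjoint_left.1 (hP.disjoint C hC) hbC hbA
    · obtain haC | haA' := hP.mem_or_mem C hC e b a (he.trans Sym2.eq_swap) hbC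
      exacts [haP C hC haC, haA haA']
  have huniv := hconn.eq_univ hclosed (Set.sdiff_nonempty.2 hsub)
  obtain ⟨r, hr⟩ := hA
  exact (huniv ▸ Set.mem_univ r : r ∈ Aᶜ \ ⋃ C ∈ P, C).1 hr

lemma inside_compl_eq_empty (hP : IsOddBarrier ends A P) (hl : NoLoops ends)
    (hcover : ⋃ C ∈ P, C = Aᶜ) (hone : ∀ C ∈ P, C.ncard = 1) : inside ends Aᶜ = ∅ := by
  refine Set.eq_empty_of_forall_notMem fun e he => ?_
  obtain ⟨a, b, hab⟩ := exists_ends_eq ends e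
  obtain ⟨ha, hb⟩ := (mem_inside_iff hab).1 he
  obtain ⟨C, hC, haC⟩ := Set.mem_iUnion₂.1 (hcover ▸ ha)
  obtain ⟨c, rfl⟩ := Set.ncard_eq_one.1 (hone C hC)
  obtain rfl := Set.mem_singleton_iff.1 haC
  obtain hba | hbA := hP.mem_or_mem _ hC e a b hab haC
  exacts [hl.ne hab hba.symm, hb hbA]

lemma ncard_compl_eq_card [Finite V] (hP : IsOddBarrier ends A P)
    (hcover : ⋃ C ∈ P, C = Aᶜ) (hone : ∀ C ∈ P, C.ncard = 1) : Aᶜ.ncard = P.card := by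
  have hsum := P.finite_toSet.ncard_biUnion (fun _ _ => Set.toFinite _) hP.pairwiseDisjoint
  rw [finsum_mem_coe_finset] at hsum
  simp only [id_eq, Finset.mem_coe, hcover] at hsum
  rw [hsum, Finset.sum_congr rfl hone, Finset.card_eq_sum_ones]

end IsOddBarrier

lemma exists_isMatchingOn [Finite V] [Finite E] (hl : NoLoops ends) (hc : IsCubic ends)
    (hb : Bridgeless ends) (heven : Even X.ncard) (hX : (boundary ends X).ncard ≤ 5) :
    ∃ M, IsMatchingOn ends X M := by
  rw [← boundary_compl] at hX
  rw [← compl_compl X] at heven ⊢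
  refine (exists_isMatchingOn_or_isOddBarrier Xᶜ heven).resolve_right ?_
  rintro ⟨A, P, hXA, hP, hcard⟩
  have := (hP.tight hl hc hb hXA hcard (by omega)).1
  omega

lemma IsMatchingOn.union (hM : IsMatchingOn ends X M) (hN : IsMatchingOn ends Y N)
    (hXY : Disjoint X Y) : IsMatchingOn ends (X ∪ Y) (M ∪ N) := by
  have hdisj := Set.disjoint_left.1 hXY
  refine ⟨Set.union_subset (hM.1.trans (inside_mono Set.subset_union_left))
    (hN.1.trans (inside_mono Set.subset_union_right)), ?_⟩
  rintro v (hv | hv)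
  · obtain ⟨e, he, huniq⟩ := hM.2 v hv
    refine ⟨e, ⟨.inl he.1, he.2⟩, ?_⟩
    rintro f ⟨hf | hf, hvf⟩
    exacts [huniq f ⟨hf, hvf⟩, (hdisj hv (hN.1 hf v hvf)).elim]
  · obtain ⟨e, he, huniq⟩ := hN.2 v hv
    refine ⟨e, ⟨.inr he.1, he.2⟩, ?_⟩
    rintro f ⟨hf | hf, hvf⟩
    exacts [(hdisj (hM.1 hf v hvf) hv).elim, huniq f ⟨hf, hvf⟩]

lemma isMatchingOn_pair (he : ends e = s(a, b)) : IsMatchingOn ends {a, b} {e} := by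
  exact ⟨by simp [inside, he], fun v hv => ⟨e, ⟨rfl, by simpa [he] using hv⟩, fun f hf => hf.1⟩⟩

lemma IsMatchingOn.isPerfectMatching (hM : IsMatchingOn ends X M) (hX : X = Set.univ) :
    IsPerfectMatching ends M :=
  fun v => hM.2 v (hX ▸ Set.mem_univ v)

lemma IsPerfectMatching.isTwoFactor_compl [Finite E] (hM : IsPerfectMatching ends M)
    (hc : IsCubic ends) : IsTwoFactor ends Mᶜ := by
  intro v
  obtain ⟨e, ⟨heM, hve⟩, huniq⟩ := hM v
  have hcompl : {f | f ∈ Mᶜ ∧ v ∈ ends f} = {f | v ∈ ends f} \ {e} := by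
    ext f
    simp only [Set.mem_ofPred_eq, Set.mem_compl_iff, Set.mem_sdiff, Set.mem_singleton_iff]
    grind
  have hdeg := Set.ncard_sdiff_singleton_add_one (s := {f | v ∈ ends f}) hve
  rw [hcompl]
  rw [hc v] at hdeg
  omega

lemma IsMatchingOn.isPerfectMatching_insert (hM : IsMatchingOn ends {a, b}ᶜ M)
    (he : ends e = s(a, b)) : IsPerfectMatching ends (insert e M) :=
  ((isMatchingOn_pair he).union hM disjoint_compl_right).isPerfectMatching
    (Set.union_compl_self _)

lemma exists_isPerfectMatching_mem [Finite V] [Finite E] (hl : NoLoops ends) (hc : IsCubic ends)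
    (hb : Bridgeless ends) (e : E) : ∃ M, IsPerfectMatching ends M ∧ e ∈ M := by
  obtain ⟨u, v, he⟩ := exists_ends_eq ends e
  have hin : 0 < (inside ends {u, v}).ncard :=
    (Set.ncard_pos).2 ⟨e, (mem_inside_iff he).2 (by simp)⟩
  have hcount := hc.isRegular.mul_ncard_eq hl {u, v}
  have hcompl := Set.ncard_add_ncard_compl {u, v}
  have heven := even_card hl hc
  rw [Set.ncard_pair (hl.ne he)] at hcount hcompl
  simp only [Set.univ_inter] at hcount
  obtain ⟨M, hM⟩ := exists_isMatchingOn hl hc hb (X := {u, v}ᶜ) (by grind)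
    (by rw [boundary_compl]; omega)
  exact ⟨insert e M, hM.isPerfectMatching_insert he, Set.mem_insert e M⟩

lemma exists_isMatchingOn_sdiff_singleton [Finite V] [Finite E] (hl : NoLoops ends)
    (hc : IsCubic ends) (hb : Bridgeless ends) (hX : (boundary ends X).ncard = 3)
    (he : ends e = s(a, b)) (ha : a ∈ X) (hbX : b ∉ X) : ∃ M, IsMatchingOn ends (X \ {a}) M := by
  have hodd : Odd X.ncard := by
    rw [← odd_ncard_boundary_iff hl hc, hX]
    decide
  have hcut : boundary ends (X \ {a}) ⊆ (boundary ends X \ {e}) ∪ ({f | a ∈ ends f} \ {e}) := by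
    rintro f ⟨p, q, hf, ⟨hpX, hpa⟩, hq⟩
    have hfe : f ≠ e := by
      rintro rfl
      obtain ⟨rfl, rfl⟩ | ⟨rfl, rfl⟩ := Sym2.eq_iff.1 (he.symm.trans hf)
      exacts [hpa rfl, hbX hpX]
    by_cases hqX : q ∈ X
    · obtain rfl : q = a := by simpa [hqX] using hq
      exact .inr ⟨by simp [hf], hfe⟩
    · exact .inl ⟨⟨p, q, hf, hpX, hqX⟩, hfe⟩
  have hle := (Set.ncard_le_ncard hcut).trans (Set.ncard_union_le _ _)
  have hcutX := Set.ncard_sdiff_singleton_add_one (s := boundary ends X) ⟨a, b, he, ha, hbX⟩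
  have hdeg := Set.ncard_sdiff_singleton_add_one (s := {f | a ∈ ends f}) (a := e) (by simp [he])
  have hXa := Set.ncard_sdiff_singleton_add_one ha
  rw [hc a] at hdeg
  exact exists_isMatchingOn hl hc hb (by grind) (by omega)

lemma exists_isPerfectMatching_inter_boundary_eq [Finite V] [Finite E] (hl : NoLoops ends)
    (hc : IsCubic ends) (hb : Bridgeless ends) (hX : (boundary ends X).ncard = 3)
    (he : e ∈ boundary ends X) :
    ∃ M, IsPerfectMatching ends M ∧ M ∩ boundary ends X = {e} := by
  have he' := he
  obtain ⟨x, y, hxy, hx, hy⟩ := he'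
  obtain ⟨M, hM⟩ := exists_isMatchingOn_sdiff_singleton hl hc hb hX hxy hx hy
  obtain ⟨N, hN⟩ := exists_isMatchingOn_sdiff_singleton hl hc hb ((boundary_compl ends X).symm ▸ hX)
    (hxy.trans Sym2.eq_swap) hy (not_not.2 hx)
  have hMN := hM.union hN
    (disjoint_compl_right.mono Set.sdiff_subset Set.sdiff_subset)
  have hcover : X \ {x} ∪ Xᶜ \ {y} = {x, y}ᶜ := by
    ext v
    simp only [Set.mem_union, Set.mem_sdiff, Set.mem_singleton_iff, Set.mem_compl_iff,
      Set.mem_insert_iff]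
    grind
  refine ⟨insert e (M ∪ N), (hcover ▸ hMN).isPerfectMatching_insert hxy, ?_⟩
  refine Set.Subset.antisymm ?_ (Set.singleton_subset_iff.2 ⟨Set.mem_insert _ _, he⟩)
  rintro f ⟨rfl | hf | hf, hfX⟩
  · rfl
  · exact (Set.disjoint_left.1 (disjoint_inside_boundary ends X)
      (inside_mono Set.sdiff_subset (hM.1 hf)) hfX).elim
  · exact (Set.disjoint_left.1 (disjoint_inside_boundary ends Xᶜ)
      (inside_mono Set.sdiff_subset (hN.1 hf)) ((boundary_compl ends X).symm ▸ hfX)).elim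

lemma exists_isTwoFactor_inter_boundary_eq [Finite V] [Finite E] (hl : NoLoops ends)
    (hc : IsCubic ends) (hb : Bridgeless ends) (hX : (boundary ends X).ncard = 3) {f g : E}
    (hf : f ∈ boundary ends X) (hg : g ∈ boundary ends X) (hfg : f ≠ g) :
    ∃ F, IsTwoFactor ends F ∧ F ∩ boundary ends X = {f, g} := by
  have hpair : {f, g} ⊆ boundary ends X := Set.pair_subset hf hg
  have hcard := Set.ncard_sdiff_add_ncard_of_subset hpair
  rw [Set.ncard_pair hfg, hX] at hcard
  obtain ⟨e, he⟩ := Set.ncard_eq_one.1 (Nat.add_right_cancel hcard)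
  obtain ⟨M, hM, hMX⟩ := exists_isPerfectMatching_inter_boundary_eq hl hc hb hX
    (he.symm.subset rfl : e ∈ boundary ends X \ {f, g}).1
  refine ⟨Mᶜ, hM.isTwoFactor_compl hc, ?_⟩
  rw [Set.inter_comm, ← Set.sdiff_eq, ← Set.sdiff_inter_self_eq_sdiff, hMX, ← he,
    Set.sdiff_sdiff_cancel_left hpair]

lemma IsTwoFactor.eq_or_eq [Finite E] (hF : IsTwoFactor ends F) {f g : E} (hf : f ∈ F) (hg : g ∈ F)
    (hfg : f ≠ g) (hvf : v ∈ ends f) (hvg : v ∈ ends g) (he : e ∈ F) (hve : v ∈ ends e) :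
    e = f ∨ e = g := by
  have hsub : {f, g} ⊆ {e | e ∈ F ∧ v ∈ ends e} :=
    Set.pair_subset ⟨hf, hvf⟩ ⟨hg, hvg⟩
  have heq := Set.eq_of_subset_of_ncard_le hsub (by rw [hF v, Set.ncard_pair hfg])
  simpa using heq.symm.subset ⟨he, hve⟩

lemma IsTwoFactor.mem_of_ne [Finite E] (hF : IsTwoFactor ends F) (hc : IsCubic ends) {f : E}
    (hf : f ∉ F) (hvf : v ∈ ends f) (hve : v ∈ ends e) (hne : e ≠ f) : e ∈ F := by
  have hsub : {e | e ∈ F ∧ v ∈ ends e} ⊆ {e | v ∈ ends e} \ {f} :=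
    fun e he => ⟨he.2, fun hef => hf (hef ▸ he.1)⟩
  have hdeg := Set.ncard_sdiff_singleton_add_one (s := {e | v ∈ ends e}) hvf
  rw [hc v] at hdeg
  have heq := Set.eq_of_subset_of_ncard_le hsub (by rw [hF v]; omega)
  exact (heq.symm.subset ⟨hve, hne⟩).1

lemma eq_of_mem_boundary (he : e ∈ boundary ends X) (ha : a ∈ X) (hb : b ∈ X) (hae : a ∈ ends e)
    (hbe : b ∈ ends e) : a = b := by
  obtain ⟨p, q, hpq, hp, hq⟩ := he
  rw [hpq, Sym2.mem_iff] at hae hbe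
  grind

lemma exists_mem_ends_of_mem_boundary (he : e ∈ boundary ends X) : ∃ v ∈ X, v ∈ ends e :=
  let ⟨a, _, hab, ha, _⟩ := he
  ⟨a, ha, by simp [hab]⟩

/-! ### Edge cuts of size three -/

section TwoEdgeCut

variable {f g : E} {x y : V}

lemma mem_component_of_inter_boundary_eq_pair [Finite V] [Finite E] (hl : NoLoops ends)
    (hF : IsTwoFactor ends F) (hcut : F ∩ boundary ends X = {f, g}) (hxf : x ∈ ends f)
    (hx : x ∈ X) (hyg : y ∈ ends g) (hy : y ∈ X) : y ∈ component ends F x := by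
  set K := component ends F x
  have hK := disjoint_boundary_component ends F x
  have hf : f ∈ F ∩ boundary ends X := by simp [hcut]
  have hfK : f ∈ F ∩ boundary ends (K ∩ X) := by
    obtain ⟨z, hz⟩ := Sym2.mem_iff_exists.1 hxf
    exact ⟨hf.1, x, z, hz, ⟨mem_component_self ends F x, hx⟩, fun hzX =>
      hl.ne hz (eq_of_mem_boundary hf.2 hx hzX.2 hxf (by simp [hz]))⟩
  have hsub : F ∩ boundary ends (K ∩ X) ⊆ {f, g} := hcut ▸ inter_boundary_inter_subset hK
  have hparity := hF.isRegular.mul_ncard_eq hl (K ∩ X)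
  have hgK : g ∈ F ∩ boundary ends (K ∩ X) := by
    by_contra hg
    have hone : F ∩ boundary ends (K ∩ X) = {f} := by
      refine Set.Subset.antisymm (fun e he => ?_) (Set.singleton_subset_iff.2 hfK)
      exact (hsub he).resolve_right fun heg => hg (heg ▸ he)
    rw [hone, Set.ncard_singleton] at hparity
    omega
  obtain ⟨-, p, q, hpq, hp, -⟩ := id hgK
  have hgX := (inter_boundary_inter_subset hK hgK).2
  exact eq_of_mem_boundary hgX hp.2 hy (by simp [hpq]) hyg ▸ hp.1

lemma disjoint_boundary_sdiff_component [Finite V] [Finite E] (hl : NoLoops ends)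
    (hF : IsTwoFactor ends F) (hcut : F ∩ boundary ends X = {f, g}) (hxf : x ∈ ends f)
    (hx : x ∈ X) (hyg : y ∈ ends g) (hy : y ∈ X) :
    Disjoint F (boundary ends (X \ component ends F x)) := by
  have hyK := mem_component_of_inter_boundary_eq_pair hl hF hcut hxf hx hyg hy
  rw [disjoint_boundary_iff]
  rintro e he p q hpq ⟨hpX, hpK⟩
  refine ⟨?_, fun hqK => hpK (mem_component_of_ends he (hpq.trans Sym2.eq_swap) hqK)⟩
  by_contra hqX
  have heX : e ∈ boundary ends X := ⟨p, q, hpq, hpX, hqX⟩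
  have hpe : p ∈ ends e := by simp [hpq]
  obtain rfl | rfl : e = f ∨ e = g := hcut.subset ⟨he, heX⟩
  · exact hpK (eq_of_mem_boundary heX hx hpX hxf hpe ▸ mem_component_self ends F x)
  · exact hpK (eq_of_mem_boundary heX hy hpX hyg hpe ▸ hyK)

lemma ncard_mod_five_eq [Finite V] [Finite E] (hl : NoLoops ends) (h5 : TwoFactorsAllC5 ends)
    (hF : IsTwoFactor ends F) (hcut : F ∩ boundary ends X = {f, g}) (hxf : x ∈ ends f)
    (hx : x ∈ X) (hyg : y ∈ ends g) (hy : y ∈ X) :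
    X.ncard % 5 = (component ends F x ∩ X).ncard ∧ X.ncard % 5 ≠ 0 := by
  set K := component ends F x
  have hf : f ∈ F ∩ boundary ends X := by simp [hcut]
  have hdvd : 5 ∣ (X \ K).ncard := dvd_ncard_of_forall_ncard_component (h5 F hF)
    (disjoint_boundary_sdiff_component hl hF hcut hxf hx hyg hy)
  have hpos : 0 < (K ∩ X).ncard := (Set.ncard_pos).2 ⟨x, mem_component_self ends F x, hx⟩
  have hlt : 0 < (K \ X).ncard := by
    obtain ⟨z, hz⟩ := Sym2.mem_iff_exists.1 hxf
    exact (Set.ncard_pos).2 ⟨z, mem_component_of_ends hf.1 hz (mem_component_self ends F x),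
      fun hzX => hl.ne hz (eq_of_mem_boundary hf.2 hx hzX hxf (by simp [hz]))⟩
  have hX := Set.ncard_inter_add_ncard_sdiff_eq_ncard X K
  have hK := Set.ncard_inter_add_ncard_sdiff_eq_ncard K X
  rw [h5 F hF x] at hK
  rw [Set.inter_comm] at hX
  omega

lemma eq_of_ncard_mod_five_eq_one [Finite V] [Finite E] (hl : NoLoops ends)
    (h5 : TwoFactorsAllC5 ends) (hF : IsTwoFactor ends F) (hcut : F ∩ boundary ends X = {f, g})
    (hxf : x ∈ ends f) (hx : x ∈ X) (hyg : y ∈ ends g) (hy : y ∈ X) (hX : X.ncard % 5 = 1) :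
    x = y := by
  have hcard := (ncard_mod_five_eq hl h5 hF hcut hxf hx hyg hy).1
  have hyK := mem_component_of_inter_boundary_eq_pair hl hF hcut hxf hx hyg hy
  exact (Set.ncard_le_one_iff).1 (hcard.symm.trans hX).le
    ⟨mem_component_self ends F x, hx⟩ ⟨hyK, hy⟩

lemma exists_ends_eq_of_ncard_mod_five_eq_two [Finite V] [Finite E] (hl : NoLoops ends)
    (h5 : TwoFactorsAllC5 ends) (hF : IsTwoFactor ends F) (hfg : f ≠ g)
    (hcut : F ∩ boundary ends X = {f, g}) (hxf : x ∈ ends f) (hx : x ∈ X) (hyg : y ∈ ends g)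
    (hy : y ∈ X) (hX : X.ncard % 5 = 2) : ∃ e, ends e = s(x, y) := by
  set K := component ends F x
  have hcard : (K ∩ X).ncard = 2 :=
    (ncard_mod_five_eq hl h5 hF hcut hxf hx hyg hy).1.symm.trans hX
  have hxK := mem_component_self ends F x
  have hyK := mem_component_of_inter_boundary_eq_pair hl hF hcut hxf hx hyg hy
  have hf : f ∈ F ∩ boundary ends X := by simp [hcut]
  have hg : g ∈ F ∩ boundary ends X := by simp [hcut]
  have hle : (F ∩ boundary ends (K ∩ X)).ncard ≤ 2 := by
    rw [← Set.ncard_pair hfg, ← hcut]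
    exact Set.ncard_le_ncard (inter_boundary_inter_subset (disjoint_boundary_component ends F x))
  have hcount := hF.isRegular.mul_ncard_eq hl (K ∩ X)
  obtain ⟨e, heF, he⟩ : (F ∩ inside ends (K ∩ X)).Nonempty := (Set.ncard_pos).1 (by omega)
  have heX := Set.disjoint_left.1 (disjoint_inside_boundary ends X)
    (inside_mono Set.inter_subset_right he)
  obtain ⟨p, q, hpq⟩ := exists_ends_eq ends e
  obtain ⟨hp, hq⟩ := (mem_inside_iff hpq).1 he
  have hKX : K ∩ X = {p, q} := (Set.eq_of_subset_of_ncard_le (Set.pair_subset hp hq)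
    (by rw [hcard, Set.ncard_pair (hl.ne hpq)])).symm
  have hxe : x ∈ ends e := by simpa [hpq] using hKX.subset ⟨hxK, hx⟩
  have hye : y ∈ ends e := by simpa [hpq] using hKX.subset ⟨hyK, hy⟩
  have hne : x ≠ y := by
    rintro rfl
    obtain rfl | rfl := hF.eq_or_eq hf.1 hg.1 hfg hxf hyg heF hxe
    exacts [heX hf.2, heX hg.2]
  exact ⟨e, (Sym2.mem_and_mem_iff hne).1 ⟨hxe, hye⟩⟩

end TwoEdgeCut

lemma ncard_eq_one_of_forall_mem_ends [Finite V] [Finite E] (hc : IsCubic ends)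
    (hconn : Connected ends) (hX : (boundary ends X).ncard = 3) (hv : v ∈ X)
    (h : ∀ e ∈ boundary ends X, v ∈ ends e) : X.ncard = 1 := by
  have hinc : boundary ends X = {e | v ∈ ends e} :=
    Set.eq_of_subset_of_ncard_le h (by rw [hX, hc v])
  have hempty : boundary ends (X \ {v}) = ∅ := by
    refine Set.eq_empty_of_forall_notMem ?_
    rintro e ⟨p, q, hpq, ⟨hpX, hpv⟩, hq⟩
    have he : e ∈ boundary ends X := by
      by_cases hqX : q ∈ X
      · obtain rfl : q = v := by simpa [hqX] using hq
        exact hinc.symm.subset (by simp [hpq])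
      · exact ⟨p, q, hpq, hpX, hqX⟩
    exact hpv (eq_of_mem_boundary he hpX hv (by simp [hpq]) (h e he))
  have hsub : X \ {v} = ∅ := by
    by_contra hne
    have huniv := hconn.eq_univ hempty (Set.nonempty_iff_ne_empty.2 hne)
    exact (huniv.symm.subset (Set.mem_univ v)).2 rfl
  rw [← Set.ncard_sdiff_singleton_add_one hv, hsub, Set.ncard_empty]

lemma ncard_eq_one_of_ncard_mod_five_eq_one [Finite V] [Finite E] (hl : NoLoops ends)
    (hc : IsCubic ends) (hb : Bridgeless ends) (hconn : Connected ends)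
    (h5 : TwoFactorsAllC5 ends) (hX : (boundary ends X).ncard = 3) (hmod : X.ncard % 5 = 1) :
    X.ncard = 1 := by
  obtain ⟨f, hf⟩ : (boundary ends X).Nonempty := (Set.ncard_pos).1 (by omega)
  obtain ⟨x, hx, hxf⟩ := exists_mem_ends_of_mem_boundary hf
  refine ncard_eq_one_of_forall_mem_ends hc hconn hX hx fun e he => ?_
  obtain rfl | hne := eq_or_ne f e
  · exact hxf
  obtain ⟨F, hF, hcut⟩ := exists_isTwoFactor_inter_boundary_eq hl hc hb hX hf he hne
  obtain ⟨y, hy, hye⟩ := exists_mem_ends_of_mem_boundary he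
  rwa [eq_of_ncard_mod_five_eq_one hl h5 hF hcut hxf hx hye hy hmod]

lemma ncard_mod_five_ne_two [Finite V] [Finite E] (hl : NoLoops ends) (hc : IsCubic ends)
    (hb : Bridgeless ends) (h5 : TwoFactorsAllC5 ends) (hX : (boundary ends X).ncard = 3) :
    X.ncard % 5 ≠ 2 := by
  intro hmod
  obtain ⟨f, g, h, hfg, hfh, hgh, hcut⟩ := Set.ncard_eq_three.1 hX
  have hf : f ∈ boundary ends X := by simp [hcut]
  have hg : g ∈ boundary ends X := by simp [hcut]
  have hh : h ∈ boundary ends X := by simp [hcut]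
  obtain ⟨x, hx, hxf⟩ := exists_mem_ends_of_mem_boundary hf
  obtain ⟨y, hy, hyg⟩ := exists_mem_ends_of_mem_boundary hg
  obtain ⟨z, hz, hzh⟩ := exists_mem_ends_of_mem_boundary hh
  have adj_of_ne : ∀ {i j v w}, i ∈ boundary ends X → j ∈ boundary ends X → i ≠ j → v ∈ ends i →
      v ∈ X → w ∈ ends j → w ∈ X → ∃ e, ends e = s(v, w) := fun hi hj hij hvi hv hwj hw =>
    let ⟨_, hF, hFX⟩ := exists_isTwoFactor_inter_boundary_eq hl hc hb hX hi hj hij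
    exists_ends_eq_of_ncard_mod_five_eq_two hl h5 hF hij hFX hvi hv hwj hw hmod
  obtain ⟨i, hi⟩ := adj_of_ne hf hg hfg hxf hx hyg hy
  obtain ⟨j, hj⟩ := adj_of_ne hg hh hgh hyg hy hzh hz
  obtain ⟨k, hk⟩ := adj_of_ne hh hf hfh.symm hzh hz hxf hx
  obtain ⟨F, hF, hFX⟩ := exists_isTwoFactor_inter_boundary_eq hl hc hb hX hg hh hgh
  have hfF : f ∉ F := fun hfF => (hFX.subset ⟨hfF, hf⟩ : f = g ∨ f = h).elim hfg hfh
  have hkf : k ≠ f := by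
    rintro rfl
    exact hl.ne hk (eq_of_mem_boundary hf hz hx (by simp [hk]) hxf)
  have hkF : k ∈ F := hF.mem_of_ne hc hfF hxf (by simp [hk]) hkf
  have hzK := mem_component_of_inter_boundary_eq_pair hl hF hFX hyg hy hzh hz
  have hsub : {x, y, z} ⊆ component ends F y ∩ X := by
    rintro v (rfl | rfl | rfl)
    exacts [⟨mem_component_of_ends hkF hk hzK, hx⟩, ⟨mem_component_self ends F _, hy⟩, ⟨hzK, hz⟩]
  have hcard := Set.ncard_le_ncard hsub
  rw [Set.ncard_eq_three.2 ⟨x, y, z, hl.ne hi, (hl.ne hk).symm, hl.ne hj, rfl⟩,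
    ← (ncard_mod_five_eq hl h5 hF hFX hyg hy hzh hz).1, hmod] at hcard
  omega

lemma five_dvd_card [Finite V] [Finite E] (hl : NoLoops ends) (hc : IsCubic ends)
    (hb : Bridgeless ends) (h5 : TwoFactorsAllC5 ends) (e : E) : 5 ∣ Nat.card V := by
  obtain ⟨M, hM, -⟩ := exists_isPerfectMatching_mem hl hc hb e
  rw [← Set.ncard_univ]
  exact dvd_ncard_of_forall_ncard_component (h5 _ (hM.isTwoFactor_compl hc))
    (by simp [boundary_univ])

lemma ncard_mod_five_ne_zero [Finite V] [Finite E] (hl : NoLoops ends) (hc : IsCubic ends)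
    (hb : Bridgeless ends) (h5 : TwoFactorsAllC5 ends) (hX : (boundary ends X).ncard = 3) :
    X.ncard % 5 ≠ 0 := by
  obtain ⟨f, g, h, -, -, hgh, hcut⟩ := Set.ncard_eq_three.1 hX
  have hg : g ∈ boundary ends X := by simp [hcut]
  have hh : h ∈ boundary ends X := by simp [hcut]
  obtain ⟨F, hF, hFX⟩ := exists_isTwoFactor_inter_boundary_eq hl hc hb hX hg hh hgh
  obtain ⟨y, hy, hyg⟩ := exists_mem_ends_of_mem_boundary hg
  obtain ⟨z, hz, hzh⟩ := exists_mem_ends_of_mem_boundary hh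
  exact (ncard_mod_five_eq hl h5 hF hFX hyg hy hzh hz).2

lemma ncard_eq_one_or_ncard_compl_eq_one [Finite V] [Finite E] (hl : NoLoops ends)
    (hc : IsCubic ends) (hb : Bridgeless ends) (hconn : Connected ends)
    (h5 : TwoFactorsAllC5 ends) (hX : (boundary ends X).ncard = 3) :
    X.ncard = 1 ∨ Xᶜ.ncard = 1 := by
  have hXc : (boundary ends Xᶜ).ncard = 3 := by rwa [boundary_compl]
  obtain ⟨e, -⟩ : (boundary ends X).Nonempty := (Set.ncard_pos).1 (by omega)
  have hdvd := five_dvd_card hl hc hb h5 e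
  rw [← Set.ncard_add_ncard_compl X] at hdvd
  have hne_zero := ncard_mod_five_ne_zero hl hc hb h5 hX
  have hne_two := ncard_mod_five_ne_two hl hc hb h5 hX
  have hne_two' := ncard_mod_five_ne_two hl hc hb h5 hXc
  have hone := ncard_eq_one_of_ncard_mod_five_eq_one hl hc hb hconn h5 hX
  have hone' := ncard_eq_one_of_ncard_mod_five_eq_one hl hc hb hconn h5 hXc
  omega

/-! ### Paths of length three -/

section Path

variable {A R : Set V} {P : Finset (Set V)} {e₁ e₂ e₃ : E} {u w x : V}

lemma ncard_inter_eq_ncard_sdiff_add [Finite V] [Finite E] (hl : NoLoops ends)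
    (hF : IsTwoFactor ends F) (hK : Disjoint F (boundary ends K)) (hA : inside ends Aᶜ = ∅) :
    (K ∩ A).ncard = (K \ A).ncard + (F ∩ inside ends (K ∩ A)).ncard := by
  have hcut : F ∩ boundary ends (K \ A) = F ∩ boundary ends (K ∩ A) := by
    ext e
    refine and_congr_right fun heF => ?_
    obtain ⟨a, b, hab⟩ := exists_ends_eq ends e
    have hKab := disjoint_boundary_iff.1 hK e heF a b hab
    have hKba := disjoint_boundary_iff.1 hK e heF b a (hab.trans Sym2.eq_swap)
    simp only [mem_boundary_iff hab, Set.mem_sdiff, Set.mem_inter_iff]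
    tauto
  have hinside : inside ends (K \ A) = ∅ :=
    Set.subset_empty_iff.1 (hA ▸ inside_mono fun _ hv => hv.2)
  have hinter := hF.isRegular.mul_ncard_eq hl (K ∩ A)
  have hsdiff := hF.isRegular.mul_ncard_eq hl (K \ A)
  rw [hcut, hinside, Set.inter_empty, Set.ncard_empty] at hsdiff
  omega

lemma ncard_ne_ncard_compl_add_two [Finite V] [Finite E] (hl : NoLoops ends)
    (h5 : TwoFactorsAllC5 ends) (hF : IsTwoFactor ends F) (hA : inside ends Aᶜ = ∅)
    (hv : ∀ e ∈ F ∩ inside ends A, v ∈ ends e) : A.ncard ≠ Aᶜ.ncard + 2 := by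
  intro hcard
  set K := component ends F v
  have htotal := ncard_inter_eq_ncard_sdiff_add hl hF (K := Set.univ)
    (by simp [boundary_univ]) hA
  have hK := ncard_inter_eq_ncard_sdiff_add hl hF (K := K) (disjoint_boundary_component ends F v) hA
  have hinside : F ∩ inside ends A ⊆ F ∩ inside ends (K ∩ A) := by
    rintro e ⟨heF, heA⟩
    obtain ⟨z, hz⟩ := Sym2.mem_iff_exists.1 (hv e ⟨heF, heA⟩)
    obtain ⟨hvA, hzA⟩ := (mem_inside_iff hz).1 heA
    have hvK := mem_component_self ends F v
    exact ⟨heF, (mem_inside_iff hz).2 ⟨⟨hvK, hvA⟩, mem_component_of_ends heF hz hvK, hzA⟩⟩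
  rw [hinside.antisymm' (Set.inter_subset_inter_right F (inside_mono Set.inter_subset_right))] at hK
  rw [Set.univ_inter, ← Set.compl_eq_univ_sdiff] at htotal
  have hfive := Set.ncard_inter_add_ncard_sdiff_eq_ncard K A
  rw [h5 F hF v] at hfive
  omega

lemma IsOddBarrier.inside_compl_eq_empty_and_ncard_eq [Finite V] [Finite E]
    (hP : IsOddBarrier ends A P) (hl : NoLoops ends) (hc : IsCubic ends) (hb : Bridgeless ends)
    (hconn : Connected ends) (h5 : TwoFactorsAllC5 ends) (hRA : R ⊆ A)
    (hcard : A.ncard + 2 ≤ P.card + R.ncard) (hR : R.ncard = 4)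
    (hbd : (boundary ends R).ncard ≤ 6) :
    inside ends Aᶜ = ∅ ∧ A.ncard = Aᶜ.ncard + 2 := by
  obtain ⟨-, hcard_eq, -, hthree, hunion⟩ := hP.tight hl hc hb hRA hcard hbd
  have hA := Set.ncard_le_ncard hRA
  have hone : ∀ C ∈ P, C.ncard = 1 := fun C hC => by
    have hAC := Set.ncard_le_ncard (hP.disjoint C hC).subset_compl_left
    have := ncard_eq_one_or_ncard_compl_eq_one hl hc hb hconn h5 (hthree C hC)
    omega
  have hcover := hP.biUnion_eq_compl hconn ((Set.ncard_pos).1 (by omega)) hunion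
  have hAc := hP.ncard_compl_eq_card hcover hone
  exact ⟨hP.inside_compl_eq_empty hl hcover hone, by omega⟩

lemma ncard_path (hl : NoLoops ends) (h₁ : ends e₁ = s(u, v)) (h₂ : ends e₂ = s(v, w))
    (h₃ : ends e₃ = s(w, x)) (huw : u ≠ w) (hvx : v ≠ x) (hux : u ≠ x) :
    ({u, v, w, x} : Set V).ncard = 4 := by
  rw [Set.ncard_insert_of_notMem (by simp [hl.ne h₁, huw, hux]),
    Set.ncard_eq_three.2 ⟨v, w, x, hl.ne h₂, hvx, hl.ne h₃, rfl⟩]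

lemma ncard_edges_path (hl : NoLoops ends) (h₁ : ends e₁ = s(u, v)) (h₂ : ends e₂ = s(v, w))
    (h₃ : ends e₃ = s(w, x)) (huw : u ≠ w) (hvx : v ≠ x) : ({e₁, e₂, e₃} : Set E).ncard = 3 := by
  have hvw := hl.ne h₂
  refine Set.ncard_eq_three.2 ⟨e₁, e₂, e₃, ?_, ?_, ?_, rfl⟩ <;> rintro rfl <;> grind

lemma exists_isPerfectMatching_mem_mem [Finite V] [Finite E] (hl : NoLoops ends)
    (hc : IsCubic ends) (hb : Bridgeless ends) (hconn : Connected ends)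
    (h5 : TwoFactorsAllC5 ends) (h₁ : ends e₁ = s(u, v)) (h₂ : ends e₂ = s(v, w))
    (h₃ : ends e₃ = s(w, x)) (huw : u ≠ w) (hvx : v ≠ x) (hux : u ≠ x) :
    ∃ M, IsPerfectMatching ends M ∧ e₁ ∈ M ∧ e₃ ∈ M := by
  have hR := ncard_path hl h₁ h₂ h₃ huw hvx hux
  have hedges := ncard_edges_path hl h₁ h₂ h₃ huw hvx
  have hsub : {e₁, e₂, e₃} ⊆ inside ends {u, v, w, x} := by
    rintro e (rfl | rfl | rfl) <;> simp [inside, *]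
  have hin := Set.ncard_le_ncard hsub
  have hcount := hc.isRegular.mul_ncard_eq hl {u, v, w, x}
  simp only [Set.univ_inter, hR] at hcount
  have heven : Even ({u, v, w, x} : Set V)ᶜ.ncard := by
    have := even_card hl hc
    have := Set.ncard_add_ncard_compl {u, v, w, x}
    grind
  obtain ⟨M, hM⟩ | ⟨A, P, hRA, hP, hcard⟩ :=
    exists_isMatchingOn_or_isOddBarrier (ends := ends) {u, v, w, x} heven
  · have hdisj : Disjoint ({u, v} : Set V) {w, x} := by
      simp [huw.symm, hux.symm, (hl.ne h₂).symm, hvx.symm]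
    have hcover : {u, v} ∪ {w, x} = ({u, v, w, x} : Set V) := by
      simp only [Set.insert_union, Set.singleton_union]
    have hpath := hcover ▸ (isMatchingOn_pair h₁).union (isMatchingOn_pair h₃) hdisj
    exact ⟨_, (hpath.union hM disjoint_compl_right).isPerfectMatching (Set.union_compl_self _),
      by simp, by simp⟩
  · exfalso
    obtain ⟨M, hM, he₁⟩ := exists_isPerfectMatching_mem hl hc hb e₁
    obtain ⟨hbd, -, hinside, -⟩ := hP.tight hl hc hb hRA hcard (by omega)
    obtain ⟨hempty, hA⟩ :=
      hP.inside_compl_eq_empty_and_ncard_eq hl hc hb hconn h5 hRA hcard hR hbd.le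
    refine ncard_ne_ncard_compl_add_two hl h5 (hM.isTwoFactor_compl hc) hempty (v := w) ?_ hA
    rintro e ⟨heM, heA⟩
    rw [hinside, ← Set.eq_of_subset_of_ncard_le hsub (by omega)] at heA
    obtain rfl | rfl | rfl := heA
    exacts [(heM he₁).elim, by simp [h₂], by simp [h₃]]

lemma IsCubic.exists_ends_eq_ne_ne (hc : IsCubic ends) (v : V) (f g : E) :
    ∃ e w, ends e = s(v, w) ∧ e ≠ f ∧ e ≠ g := by
  have hlt : ({f, g} : Set E).ncard < {e | v ∈ ends e}.ncard := by
    rw [hc v]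
    exact (Set.ncard_insert_le f {g}).trans_lt (by simp)
  obtain ⟨e, hve, hne⟩ := Set.exists_mem_notMem_of_ncard_lt_ncard hlt
  obtain ⟨w, hw⟩ := Sym2.mem_iff_exists.1 hve
  exact ⟨e, w, hw, by simpa using hne⟩

lemma not_triangle [Finite V] [Finite E] (hl : NoLoops ends) (hc : IsCubic ends)
    (hb : Bridgeless ends) (hconn : Connected ends) (h5 : TwoFactorsAllC5 ends)
    (h₁ : ends e₁ = s(u, v)) (h₂ : ends e₂ = s(v, w)) : ends e₃ ≠ s(w, u) := by
  intro h₃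
  have huv := hl.ne h₁
  have huw := (hl.ne h₃).symm
  have hcard : ({u, v, w} : Set V).ncard = 3 :=
    Set.ncard_eq_three.2 ⟨u, v, w, huv, huw, hl.ne h₂, rfl⟩
  have hedges := ncard_edges_path hl h₁ h₂ h₃ huw huv.symm
  have hsub : {e₁, e₂, e₃} ⊆ inside ends {u, v, w} := by
    rintro e (rfl | rfl | rfl) <;> simp [inside, *]
  have hin := Set.ncard_le_ncard hsub
  have hcount := hc.isRegular.mul_ncard_eq hl {u, v, w}
  have hbd := three_le_ncard_boundary hl hc hb (X := {u, v, w}) (hcard ▸ by decide)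
  simp only [Set.univ_inter, hcard] at hcount
  have hdvd := five_dvd_card hl hc hb h5 e₁
  have hcompl := Set.ncard_add_ncard_compl {u, v, w}
  obtain hone | hone := ncard_eq_one_or_ncard_compl_eq_one hl hc hb hconn h5
    (X := {u, v, w}) (by omega) <;> omega

lemma exists_isPerfectMatching_notMem [Finite V] [Finite E] (hl : NoLoops ends)
    (hc : IsCubic ends) (hb : Bridgeless ends) (hconn : Connected ends)
    (h5 : TwoFactorsAllC5 ends) (h₁ : ends e₁ = s(u, v)) (h₂ : ends e₂ = s(v, w))
    (h₃ : ends e₃ = s(w, x)) (huw : u ≠ w) (hvx : v ≠ x) :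
    ∃ M, IsPerfectMatching ends M ∧ e₁ ∉ M ∧ e₂ ∉ M ∧ e₃ ∉ M := by
  suffices h : ∃ f g M, IsPerfectMatching ends M ∧ f ∈ M ∧ g ∈ M ∧ v ∈ ends f ∧ w ∈ ends g ∧
      e₁ ≠ f ∧ e₂ ≠ f ∧ e₃ ≠ g by
    obtain ⟨f, g, M, hM, hfM, hgM, hvf, hwg, h₁f, h₂f, h₃g⟩ := h
    exact ⟨M, hM, fun h => h₁f ((hM v).unique ⟨h, by simp [h₁]⟩ ⟨hfM, hvf⟩),
      fun h => h₂f ((hM v).unique ⟨h, by simp [h₂]⟩ ⟨hfM, hvf⟩),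
      fun h => h₃g ((hM w).unique ⟨h, by simp [h₃]⟩ ⟨hgM, hwg⟩)⟩
  obtain ⟨f, a, hf, hf₁, hf₂⟩ := hc.exists_ends_eq_ne_ne v e₁ e₂
  obtain ⟨g, b, hg, hg₂, hg₃⟩ := hc.exists_ends_eq_ne_ne w e₂ e₃
  obtain rfl | haw := eq_or_ne a w
  · obtain ⟨M, hM, hfM⟩ := exists_isPerfectMatching_mem hl hc hb f
    have h₃f : e₃ ≠ f := by rintro rfl; grind
    exact ⟨f, f, M, hM, hfM, hfM, by simp [hf], by simp [hf], hf₁.symm, hf₂.symm, h₃f⟩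
  obtain rfl | hbv := eq_or_ne b v
  · obtain ⟨M, hM, hgM⟩ := exists_isPerfectMatching_mem hl hc hb g
    have h₁g : e₁ ≠ g := by rintro rfl; grind
    exact ⟨g, g, M, hM, hgM, hgM, by simp [hg], by simp [hg], h₁g, hg₂.symm, hg₃.symm⟩
  have hab : a ≠ b := by
    rintro rfl
    exact not_triangle hl hc hb hconn h5 (hf.trans Sym2.eq_swap) h₂ hg
  obtain ⟨M, hM, hfM, hgM⟩ := exists_isPerfectMatching_mem_mem hl hc hb hconn h5
    (hf.trans Sym2.eq_swap) h₂ hg haw hbv.symm hab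
  exact ⟨f, g, M, hM, hfM, hgM, by simp [hf], by simp [hg], hf₁.symm, hf₂.symm, hg₃.symm⟩

lemma IsTwoFactor.eq_or_eq_of_ends [Finite E] (hF : IsTwoFactor ends F) (he₁ : e₁ ∈ F)
    (he₂ : e₂ ∈ F) (he₃ : e₃ ∈ F) (h₁ : ends e₁ = s(u, v)) (h₂ : ends e₂ = s(v, w))
    (h₃ : ends e₃ = s(x, v)) (huw : u ≠ w) : x = u ∨ x = w := by
  have hne : e₁ ≠ e₂ := by rintro rfl; grind
  have heq := hF.eq_or_eq he₁ he₂ hne (v := v) (by simp [h₁]) (by simp [h₂]) he₃ (by simp [h₃])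
  grind

lemma IsTwoFactor.exists_closing_edges [Finite V] [Finite E] (hl : NoLoops ends)
    (hF : IsTwoFactor ends F) (hcomp : (component ends F u).ncard = 5) (he₁ : e₁ ∈ F)
    (he₂ : e₂ ∈ F) (he₃ : e₃ ∈ F) (h₁ : ends e₁ = s(u, v)) (h₂ : ends e₂ = s(v, w))
    (h₃ : ends e₃ = s(w, x)) (huw : u ≠ w) (hvx : v ≠ x) (hux : u ≠ x) :
    ∃ y f g, ends f = s(x, y) ∧ ends g = s(y, u) ∧ y ∉ ({u, v, w, x} : Set V) := by
  have hu := mem_component_self ends F u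
  have hv := mem_component_of_ends he₁ h₁ hu
  have hw := mem_component_of_ends he₂ h₂ hv
  have hx := mem_component_of_ends he₃ h₃ hw
  have hsub : {u, v, w, x} ⊆ component ends F u := by
    rintro z (rfl | rfl | rfl | rfl) <;> assumption
  have hcard := Set.ncard_sdiff_add_ncard_of_subset hsub
  rw [ncard_path hl h₁ h₂ h₃ huw hvx hux, hcomp] at hcard
  obtain ⟨y, hy⟩ := Set.ncard_eq_one.1 (Nat.add_right_cancel hcard)
  obtain ⟨hyK, hyR⟩ := (hy.symm.subset rfl : y ∈ component ends F u \ {u, v, w, x})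
  have hends : ∀ f ∈ F, y ∈ ends f → ends f = s(x, y) ∨ ends f = s(y, u) := by
    intro f hf hyf
    obtain ⟨z, hz⟩ := Sym2.mem_iff_exists.1 hyf
    have hzy := hl.ne hz
    have hzK := mem_component_of_ends hf hz hyK
    have hzR : z ∈ ({u, v, w, x} : Set V) := by
      by_contra hzR
      exact hzy (hy.subset ⟨hzK, hzR⟩ : z = y).symm
    obtain rfl | rfl | rfl | rfl := hzR
    · exact .inr hz
    · obtain rfl | rfl := hF.eq_or_eq_of_ends he₁ he₂ hf h₁ h₂ hz huw <;> simp at hyR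
    · obtain rfl | rfl := hF.eq_or_eq_of_ends he₂ he₃ hf h₂ h₃ hz hvx <;> simp at hyR
    · exact .inl (hz.trans Sym2.eq_swap)
  obtain ⟨f, g, hfg, hfgy⟩ := Set.ncard_eq_two.1 (hF y)
  obtain ⟨hfF, hyf⟩ := hfgy.symm.subset (.inl rfl)
  obtain ⟨hgF, hyg⟩ := hfgy.symm.subset (.inr rfl)
  have hxe := hF.eq_or_eq hfF hgF hfg (e := e₃) (v := x)
  have hue := hF.eq_or_eq hfF hgF hfg (e := e₁) (v := u)
  obtain hf | hf := hends f hfF hyf <;> obtain hg | hg := hends g hgF hyg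
  · grind
  · exact ⟨y, f, g, hf, hg, hyR⟩
  · exact ⟨y, g, f, hg, hf, hyR⟩
  · grind

end Path

lemma injective_of_ends_eq {n : ℕ} (hn : (2 : ZMod n) ≠ 0) {c : ZMod n → V} {f : ZMod n → E}
    (hc : Function.Injective c) (hf : ∀ i, ends (f i) = s(c i, c (i + 1))) :
    Function.Injective f := by
  intro i j hij
  have hends : s(c i, c (i + 1)) = s(c j, c (j + 1)) := by rw [← hf, ← hf, hij]
  obtain ⟨h, -⟩ | ⟨hi, hj⟩ := Sym2.eq_iff.1 hends
  · exact hc h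
  · have hij := hc hi
    have hji := hc hj
    refine absurd ?_ hn
    linear_combination hji - hij

end Mg

theorem stmt11 {V E : Type} [Fintype V] [Fintype E] (ends : E → Sym2 V)
    (hl : Mg.NoLoops ends) (hc : Mg.IsCubic ends) (hb : Mg.Bridgeless ends)
    (hconn : Mg.Connected ends) (h5 : Mg.TwoFactorsAllC5 ends) :
    ∀ (u v w x : V) (e₁ e₂ e₃ : E),
      ends e₁ = s(u, v) → ends e₂ = s(v, w) → ends e₃ = s(w, x) →
      u ≠ w → v ≠ x → u ≠ x →
      ∃ (c : ZMod 5 → V) (f : ZMod 5 → E),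
        Function.Injective c ∧ Function.Injective f ∧
        (∀ i, ends (f i) = s(c i, c (i + 1))) ∧
        e₁ ∈ Set.range f ∧ e₂ ∈ Set.range f ∧ e₃ ∈ Set.range f := by
  intro u v w x e₁ e₂ e₃ h₁ h₂ h₃ huw hvx hux
  obtain ⟨M, hM, he₁, he₂, he₃⟩ :=
    Mg.exists_isPerfectMatching_notMem hl hc hb hconn h5 h₁ h₂ h₃ huw hvx
  have hF := hM.isTwoFactor_compl hc
  obtain ⟨y, f, g, hf, hg, hy⟩ :=
    hF.exists_closing_edges hl (h5 _ hF u) he₁ he₂ he₃ h₁ h₂ h₃ huw hvx hux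
  let c : ZMod 5 → V := ![u, v, w, x, y]
  let edge : ZMod 5 → E := ![e₁, e₂, e₃, f, g]
  have hcycle : ∀ i, ends (edge i) = s(c i, c (i + 1)) := by
    intro i
    fin_cases i
    exacts [h₁, h₂, h₃, hf, hg]
  have hnodup : [u, v, w, x, y].Nodup := by
    simp only [Set.mem_insert_iff, Set.mem_singleton_iff, not_or] at hy
    simp [hl.ne h₁, hl.ne h₂, hl.ne h₃, huw, hvx, hux, Ne.symm, hy]
  have hinj : Function.Injective c := (List.nodup_ofFn (n := 5)).1 hnodup
  exact ⟨c, edge, hinj, Mg.injective_of_ends_eq (by decide) hinj hcycle, hcycle,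
    ⟨0, rfl⟩, ⟨1, rfl⟩, ⟨2, rfl⟩⟩
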